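/- Let a > 0, let U ⊂ ℝ³ be an open neighborhood of the sphere ∂B_a = {x ∈ ℝ³ : |x| = a}, and let y : U → ℝ³ be continuously differentiable and injective. Then the 2-dimensional Hausdorff measure of the image of the sphere satisfies H²( y(∂B_a) ) = ∫_{∂B_a} | cof(∇y(x)) ν(x) | dH²(x), where ν(x) = x/a is the outward unit normal. -/

import Mathlib

open Matrix MeasureTheory

/-- The cofactor matrix: transpose of the adjugate. -/
noncomputable def cof (A : Matrix (Fin 3) (Fin 3) ℝ) : Matrix (Fin 3) (Fin 3) ℝ :=
  (Matrix.adjugate A)ᵀ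

/-- The Jacobian matrix `(∇y)_{ij} = ∂y_i/∂x_j` of a map `y : ℝ³ → ℝ³`. -/
noncomputable def jacE (y : EuclideanSpace ℝ (Fin 3) → EuclideanSpace ℝ (Fin 3))
    (x : EuclideanSpace ℝ (Fin 3)) : Matrix (Fin 3) (Fin 3) ℝ :=
  fun i j => fderiv ℝ y x (EuclideanSpace.single j 1) i


open Filter Topology Module NNReal ENNReal

section HausdorffArea

/-- Comparison of Hausdorff measures of two images. -/
lemma hausdorff_image_le_of_dist_le {X Y Z : Type*} [MetricSpace Y] [MeasurableSpace Y]
    [BorelSpace Y] [MetricSpace Z] [MeasurableSpace Z] [BorelSpace Z]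
    (f : X → Y) (g : X → Z) (A : Set X) (K : ℝ≥0)
    (h : ∀ x ∈ A, ∀ x' ∈ A, dist (f x) (f x') ≤ K * dist (g x) (g x')) :
    μH[2] (f '' A) ≤ (K : ℝ≥0∞) ^ 2 * μH[2] (g '' A) := by
  rcases A.eq_empty_or_nonempty with rfl | ⟨a0, ha0⟩
  · simp
  have : Nonempty X := ⟨a0⟩
  have hinv : ∀ x ∈ A, Function.invFunOn g A (g x) ∈ A ∧ g (Function.invFunOn g A (g x)) = g x :=
    fun x hx => ⟨Function.invFunOn_mem ⟨x, hx, rfl⟩, Function.invFunOn_eq ⟨x, hx, rfl⟩⟩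
  have hf : ∀ x ∈ A, f (Function.invFunOn g A (g x)) = f x := by
    intro x hx
    have := h _ (hinv x hx).1 x hx
    rw [(hinv x hx).2, dist_self, mul_zero] at this
    exact dist_le_zero.1 this
  have himg : f '' A = (f ∘ Function.invFunOn g A) '' (g '' A) := by
    rw [Set.image_image]
    exact Set.image_congr fun x hx => (hf x hx).symm
  have hl : LipschitzOnWith K (f ∘ Function.invFunOn g A) (g '' A) := by
    apply LipschitzOnWith.of_dist_le_mul
    rintro _ ⟨x, hx, rfl⟩ _ ⟨x', hx', rfl⟩
    simp only [Function.comp]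
    rw [hf x hx, hf x' hx']
    exact h x hx x' hx'
  rw [himg]
  have := hl.hausdorffMeasure_image_le (d := 2) (by norm_num)
  simpa using this

lemma hausdorff_linear_image {T W : Type*} [NormedAddCommGroup T] [InnerProductSpace ℝ T]
    [FiniteDimensional ℝ T] [MeasurableSpace T] [BorelSpace T]
    [NormedAddCommGroup W] [InnerProductSpace ℝ W] [MeasurableSpace W] [BorelSpace W]
    (hT : finrank ℝ T = 2) (M : T →ₗ[ℝ] W) (B : Set T) :
    μH[2] (M '' B) = ENNReal.ofReal M.normDet * μH[2] B := by
  have := M.hausdorffMeasure_image B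
  rw [hT] at this
  exact_mod_cast this

lemma exists_degenerate_delta {T W : Type*} [NormedAddCommGroup T] [InnerProductSpace ℝ T]
    [FiniteDimensional ℝ T] [NormedAddCommGroup W] [InnerProductSpace ℝ W]
    (hT : finrank ℝ T = 2) (M : T →ₗ[ℝ] W) (hM : M.normDet = 0) (η : ℝ) (hη : 0 < η) :
    ∀ᶠ δ in 𝓝[>] (0 : ℝ), ((WithLp.linearEquiv 2 ℝ (W × T)).symm.toLinearMap ∘ₗ
        (M.prod (δ • LinearMap.id))).normDet ≤ η := by
  let b : OrthonormalBasis (Fin 2) ℝ T := (stdOrthonormalBasis ℝ T).reindex (finCongr hT)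
  have h0 := M.normDet_sq_eq_det_gram b
  rw [hM] at h0
  have key : ∀ δ : ℝ, ((WithLp.linearEquiv 2 ℝ (W × T)).symm.toLinearMap ∘ₗ
        (M.prod (δ • LinearMap.id))).normDet ^ 2 =
      (inner ℝ (M (b 0)) (M (b 0)) + δ^2) * (inner ℝ (M (b 1)) (M (b 1)) + δ^2)
        - inner ℝ (M (b 0)) (M (b 1)) * inner ℝ (M (b 1)) (M (b 0)) := by
    intro δ
    have := ((WithLp.linearEquiv 2 ℝ (W × T)).symm.toLinearMap ∘ₗ
        (M.prod (δ • LinearMap.id))).normDet_sq_eq_det_gram b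
    simp only [RCLike.ofReal_real_eq_id, id] at this
    rw [this, Matrix.det_fin_two]
    have h01 : inner ℝ (b 0) (b 1) = 0 := b.orthonormal.2 (by decide)
    have h10 : inner ℝ (b 1) (b 0) = 0 := b.orthonormal.2 (by decide)
    have h00 : inner ℝ (b 0) (b 0) = 1 := by rw [real_inner_self_eq_norm_sq]; simp
    have h11 : inner ℝ (b 1) (b 1) = 1 := by rw [real_inner_self_eq_norm_sq]; simp
    have hin : ∀ u v : T, inner ℝ (((WithLp.linearEquiv 2 ℝ (W × T)).symm.toLinearMap ∘ₗ
        (M.prod (δ • LinearMap.id))) u) (((WithLp.linearEquiv 2 ℝ (W × T)).symm.toLinearMap ∘ₗ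
        (M.prod (δ • LinearMap.id))) v) = inner ℝ (M u) (M v) + δ ^ 2 * inner ℝ u v := by
      intro u v
      rw [WithLp.prod_inner_apply]
      change inner ℝ (M u) (M v) + inner ℝ (δ • u) (δ • v) = _
      rw [real_inner_smul_left, real_inner_smul_right]
      ring
    simp only [Matrix.gram_apply, hin, h00, h01, h10, h11]
    ring
  have ht : Tendsto (fun δ : ℝ => (inner ℝ (M (b 0)) (M (b 0)) + δ^2) *
      (inner ℝ (M (b 1)) (M (b 1)) + δ^2)
        - inner ℝ (M (b 0)) (M (b 1)) * inner ℝ (M (b 1)) (M (b 0))) (𝓝[>] 0) (𝓝 0) := by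
    apply tendsto_nhdsWithin_of_tendsto_nhds
    have hc : Continuous (fun δ : ℝ => (inner ℝ (M (b 0)) (M (b 0)) + δ^2) *
      (inner ℝ (M (b 1)) (M (b 1)) + δ^2)
        - inner ℝ (M (b 0)) (M (b 1)) * inner ℝ (M (b 1)) (M (b 0))) := by fun_prop
    have := hc.tendsto 0
    convert this using 2
    simp only [RCLike.ofReal_real_eq_id, id, Matrix.det_fin_two, Matrix.gram_apply] at h0
    simpa using h0
  filter_upwards [ht.eventually (gt_mem_nhds (show (0:ℝ) < η^2 by positivity))] with δ hδ
  rw [← key] at hδ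
  exact (abs_le_of_sq_le_sq' hδ.le hη.le).2

/-- Local two sided comparison. -/
lemma local_area_estimate {V T W : Type*} [MetricSpace V] [MeasurableSpace V] [BorelSpace V]
    [NormedAddCommGroup T] [InnerProductSpace ℝ T]
    [FiniteDimensional ℝ T] [MeasurableSpace T] [BorelSpace T]
    [NormedAddCommGroup W] [InnerProductSpace ℝ W] [FiniteDimensional ℝ W]
    [MeasurableSpace W] [BorelSpace W]
    (hT : finrank ℝ T = 2) (M : T →ₗ[ℝ] W) (η : ℝ) (hη : 0 < η) :
    ∃ δ : ℝ, 0 < δ ∧ ∀ (A : Set V) (f : V → W) (P : V → T),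
      (∀ x ∈ A, ∀ x' ∈ A, dist (P x) (P x') ≤ dist x x') →
      (∀ x ∈ A, ∀ x' ∈ A, dist x x' ≤ (1 + δ) * dist (P x) (P x')) →
      (∀ x ∈ A, ∀ x' ∈ A, ‖f x - f x' - M (P x - P x')‖ ≤ δ * dist (P x) (P x')) →
      μH[2] (f '' A) ≤ ENNReal.ofReal (M.normDet + η) * μH[2] A ∧
      ENNReal.ofReal M.normDet * μH[2] A ≤ μH[2] (f '' A) + ENNReal.ofReal η * μH[2] A := by
  have hPle : ∀ (A : Set V) (P : V → T),
      (∀ x ∈ A, ∀ x' ∈ A, dist (P x) (P x') ≤ dist x x') → μH[2] (P '' A) ≤ μH[2] A := by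
    intro A P h
    have := hausdorff_image_le_of_dist_le P id A 1 (by simpa using h)
    simpa using this
  by_cases hM : M.normDet = 0
  · obtain ⟨δ, hδ, hδ0⟩ := ((exists_degenerate_delta hT M hM (η/4) (by positivity)).and
      self_mem_nhdsWithin).exists
    have hδ0 : 0 < δ := hδ0
    refine ⟨δ, hδ0, fun A f P h1 h2 h3 => ⟨?_, by simp [hM]⟩⟩
    set g := ((WithLp.linearEquiv 2 ℝ (W × T)).symm.toLinearMap ∘ₗ
        (M.prod (δ • LinearMap.id))) with hg
    have hgn : ∀ v, ‖g v‖ ^ 2 = ‖M v‖ ^ 2 + δ^2 * ‖v‖^2 := by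
      intro v
      rw [WithLp.prod_norm_sq_eq_of_L2]
      simp [hg, norm_smul, mul_pow]
    have hc := hausdorff_image_le_of_dist_le f (g ∘ P) A 2 (by
      intro x hx x' hx'
      have := h3 x hx x' hx'
      simp only [Function.comp]
      rw [dist_eq_norm, dist_eq_norm, ← map_sub]
      rw [dist_eq_norm] at this
      have e1 : ‖f x - f x'‖ ≤ ‖M (P x - P x')‖ + δ * ‖P x - P x'‖ := by
        have := norm_le_norm_add_norm_sub' (f x - f x') (M (P x - P x'))
        linarith
      refine e1.trans ?_
      have e2 := hgn (P x - P x')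
      have a1 : ‖M (P x - P x')‖ ≤ ‖g (P x - P x')‖ :=
        (abs_le_of_sq_le_sq' (by nlinarith [sq_nonneg (δ * ‖P x - P x'‖)]) (norm_nonneg _)).2
      have a2 : δ * ‖P x - P x'‖ ≤ ‖g (P x - P x')‖ :=
        (abs_le_of_sq_le_sq' (by nlinarith [sq_nonneg ‖M (P x - P x')‖]) (norm_nonneg _)).2
      push_cast
      linarith)
    rw [Set.image_comp, hausdorff_linear_image hT] at hc
    refine hc.trans ?_
    rw [← mul_assoc]
    gcongr ?_ * ?_
    · have : ((2 : ℝ≥0) : ℝ≥0∞) ^ 2 = ENNReal.ofReal 4 := by norm_num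
      rw [this, ← ENNReal.ofReal_mul (by norm_num), hM]
      exact ENNReal.ofReal_le_ofReal (by linarith)
    · exact hPle A P h1
  · have hker : M.ker = ⊥ := by
      by_contra h
      exact hM (LinearMap.normDet_eq_zero_iff_ker_ne_bot.2 h)
    obtain ⟨K, hK, hanti⟩ := M.exists_antilipschitzWith hker
    have hK' : (0:ℝ) < K := hK
    have hMlow : ∀ v, ‖v‖ ≤ K * ‖M v‖ := fun v => by
      simpa using hanti.le_mul_dist v 0
    have hev1 : ∀ᶠ δ in 𝓝[>] (0:ℝ), (1 + δ * K)^2 * M.normDet < M.normDet + η := by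
      have hc : Continuous (fun δ : ℝ => (1 + δ * K)^2 * M.normDet) := by fun_prop
      have := hc.tendsto 0
      simp only [zero_mul, add_zero, one_pow, one_mul] at this
      exact nhdsWithin_le_nhds (this.eventually (gt_mem_nhds (by linarith)))
    have hev2 : ∀ᶠ δ in 𝓝[>] (0:ℝ), M.normDet - η < ((1 - δ * K) / (1 + δ))^2 * M.normDet := by
      have hc : ContinuousAt (fun δ : ℝ => ((1 - δ * K) / (1 + δ))^2 * M.normDet) 0 := by
        fun_prop (disch := norm_num)
      have := hc.tendsto
      simp only [zero_mul, add_zero, one_pow, one_mul, sub_zero, div_one] at this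
      exact nhdsWithin_le_nhds (this.eventually (lt_mem_nhds (by linarith)))
    have hev3 : ∀ᶠ δ in 𝓝[>] (0:ℝ), δ < 1 / (K : ℝ) :=
      nhdsWithin_le_nhds (gt_mem_nhds (by positivity))
    obtain ⟨δ, ⟨hδ1, hδ2, hδ3⟩, hδ0⟩ :=
      ((hev1.and (hev2.and hev3)).and self_mem_nhdsWithin).exists
    have hδ0 : 0 < δ := hδ0
    have hδK : δ * K < 1 := by rwa [lt_div_iff₀ hK'] at hδ3
    refine ⟨δ, hδ0, fun A f P h1 h2 h3 => ⟨?_, ?_⟩⟩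
    · have hc := hausdorff_image_le_of_dist_le f (M ∘ P) A (Real.toNNReal (1 + δ * K)) (by
        intro x hx x' hx'
        have := h3 x hx x' hx'
        simp only [Function.comp]
        rw [Real.coe_toNNReal _ (by positivity)]
        rw [dist_eq_norm, dist_eq_norm, ← map_sub]
        rw [dist_eq_norm] at this
        have e1 : ‖f x - f x'‖ ≤ ‖M (P x - P x')‖ + δ * ‖P x - P x'‖ := by
          have := norm_le_norm_add_norm_sub' (f x - f x') (M (P x - P x'))
          linarith
        have := mul_le_mul_of_nonneg_left (hMlow (P x - P x')) hδ0.le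
        linarith)
      rw [Set.image_comp, hausdorff_linear_image hT] at hc
      refine hc.trans ?_
      rw [← mul_assoc]
      gcongr ?_ * ?_
      · change (ENNReal.ofReal (1 + δ * K)) ^ 2 * _ ≤ _
        rw [← ENNReal.ofReal_pow (by positivity), ← ENNReal.ofReal_mul (by positivity)]
        exact ENNReal.ofReal_le_ofReal hδ1.le
      · exact hPle A P h1
    · have hc := hausdorff_image_le_of_dist_le (M ∘ P) f A (Real.toNNReal (1 / (1 - δ * K))) (by
        intro x hx x' hx'
        have := h3 x hx x' hx'
        simp only [Function.comp]
        rw [Real.coe_toNNReal _ (by apply div_nonneg <;> linarith)]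
        rw [dist_eq_norm, dist_eq_norm, ← map_sub]
        rw [dist_eq_norm] at this
        have e1 : ‖M (P x - P x')‖ ≤ ‖f x - f x'‖ + δ * ‖P x - P x'‖ := by
          have := norm_le_norm_add_norm_sub (f x - f x') (M (P x - P x'))
          linarith
        have := mul_le_mul_of_nonneg_left (hMlow (P x - P x')) hδ0.le
        rw [one_div_mul_eq_div, le_div_iff₀ (by linarith)]
        linarith)
      rw [Set.image_comp, hausdorff_linear_image hT] at hc
      have hA := hausdorff_image_le_of_dist_le id P A (Real.toNNReal (1 + δ)) (by
        rw [Real.coe_toNNReal _ (by positivity)]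
        exact h2)
      rw [Set.image_id] at hA
      change _ ≤ (ENNReal.ofReal _) ^ 2 * _ at hc
      change _ ≤ (ENNReal.ofReal _) ^ 2 * _ at hA
      have hkey : ENNReal.ofReal (((1 - δ * K) / (1 + δ))^2 * M.normDet) * μH[2] A
          ≤ μH[2] (f '' A) := by
        have hn := M.normDet_nonneg
        calc ENNReal.ofReal (((1 - δ * K) / (1 + δ))^2 * M.normDet) * μH[2] A
            ≤ ENNReal.ofReal (((1 - δ * K) / (1 + δ))^2 * M.normDet) *
              (ENNReal.ofReal (1 + δ) ^ 2 * μH[2] (P '' A)) := by gcongr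
          _ = ENNReal.ofReal ((1 - δ * K) ^ 2) *
                (ENNReal.ofReal M.normDet * μH[2] (P '' A)) := by
              rw [← mul_assoc, ← mul_assoc, ← ENNReal.ofReal_pow (by positivity),
                ← ENNReal.ofReal_mul (by positivity), ← ENNReal.ofReal_mul (by positivity)]
              congr 2
              field_simp
          _ ≤ ENNReal.ofReal ((1 - δ * K) ^ 2) *
                (ENNReal.ofReal (1 / (1 - δ * K)) ^ 2 * μH[2] (f '' A)) := by gcongr
          _ = μH[2] (f '' A) := by
              have h1K : 0 < 1 - δ * K := by linarith
              rw [← mul_assoc, ← ENNReal.ofReal_pow (by positivity),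
                ← ENNReal.ofReal_mul (by positivity)]
              have : (1 - δ * K) ^ 2 * (1 / (1 - δ * K)) ^ 2 = 1 := by field_simp
              rw [this]; simp
      calc ENNReal.ofReal M.normDet * μH[2] A
          ≤ ENNReal.ofReal (((1 - δ * K) / (1 + δ))^2 * M.normDet + η) * μH[2] A := by
            gcongr; linarith
        _ ≤ (ENNReal.ofReal (((1 - δ * K) / (1 + δ))^2 * M.normDet) + ENNReal.ofReal η)
              * μH[2] A := by gcongr; exact ENNReal.ofReal_add_le
        _ ≤ _ := by rw [add_mul]; gcongr

end HausdorffArea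

section SphereGeometry

lemma cof_gram_identity (A : Matrix (Fin 3) (Fin 3) ℝ) (u v n : Fin 3 → ℝ)
    (huu : u ⬝ᵥ u = 1) (hvv : v ⬝ᵥ v = 1) (huv : u ⬝ᵥ v = 0)
    (hun : u ⬝ᵥ n = 0) (hvn : v ⬝ᵥ n = 0) (hnn : n ⬝ᵥ n = 1) :
    (A *ᵥ u ⬝ᵥ A *ᵥ u) * (A *ᵥ v ⬝ᵥ A *ᵥ v) - (A *ᵥ u ⬝ᵥ A *ᵥ v) ^ 2 =
      ∑ i, ((cof A) *ᵥ n) i ^ 2 := by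
  simp only [dotProduct, Fin.sum_univ_three] at huu hvv huv hun hvn hnn
  obtain ⟨w0, hw0⟩ : ∃ w, w = u 1 * v 2 - u 2 * v 1 := ⟨_, rfl⟩
  obtain ⟨w1, hw1⟩ : ∃ w, w = u 2 * v 0 - u 0 * v 2 := ⟨_, rfl⟩
  obtain ⟨w2, hw2⟩ : ∃ w, w = u 0 * v 1 - u 1 * v 0 := ⟨_, rfl⟩
  have c0 : n 1 * w2 - n 2 * w1 = 0 := by
    rw [hw1, hw2]; linear_combination u 0 * hvn - v 0 * hun
  have c1 : n 2 * w0 - n 0 * w2 = 0 := by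
    rw [hw0, hw2]; linear_combination u 1 * hvn - v 1 * hun
  have c2 : n 0 * w1 - n 1 * w0 = 0 := by
    rw [hw1, hw0]; linear_combination u 2 * hvn - v 2 * hun
  have hww : w0 ^ 2 + w1 ^ 2 + w2 ^ 2 = 1 := by
    rw [hw0, hw1, hw2]
    linear_combination (v 0 * v 0 + v 1 * v 1 + v 2 * v 2) * huu + hvv
      - (u 0 * v 0 + u 1 * v 1 + u 2 * v 2) * huv
  obtain ⟨c, hc⟩ : ∃ c, c = n 0 * w0 + n 1 * w1 + n 2 * w2 := ⟨_, rfl⟩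
  have e0 : w0 = c * n 0 := by rw [hc]; linear_combination (-w0) * hnn - n 1 * c2 + n 2 * c1
  have e1 : w1 = c * n 1 := by rw [hc]; linear_combination (-w1) * hnn - n 2 * c0 + n 0 * c2
  have e2 : w2 = c * n 2 := by rw [hc]; linear_combination (-w2) * hnn - n 0 * c1 + n 1 * c0
  have hcc : c ^ 2 = 1 := by
    rw [e0, e1, e2] at hww
    linear_combination hww - c ^ 2 * hnn
  have lag : ∀ p q : Fin 3 → ℝ, (p ⬝ᵥ p) * (q ⬝ᵥ q) - (p ⬝ᵥ q) ^ 2 =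
      (p 1 * q 2 - p 2 * q 1) ^ 2 + (p 2 * q 0 - p 0 * q 2) ^ 2
        + (p 0 * q 1 - p 1 * q 0) ^ 2 := by
    intro p q
    simp only [dotProduct, Fin.sum_univ_three]
    ring
  have hk : ∀ i, ((cof A) *ᵥ n) i = (cof A) i 0 * n 0 + (cof A) i 1 * n 1 + (cof A) i 2 * n 2 :=
    fun i => by simp [mulVec, dotProduct, Fin.sum_univ_three]
  have hA : ∀ (z : Fin 3 → ℝ) i, (A *ᵥ z) i = A i 0 * z 0 + A i 1 * z 1 + A i 2 * z 2 :=
    fun z i => by simp [mulVec, dotProduct, Fin.sum_univ_three]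
  have k0 : (A *ᵥ u) 1 * (A *ᵥ v) 2 - (A *ᵥ u) 2 * (A *ᵥ v) 1 = c * ((cof A) *ᵥ n) 0 := by
    have : c * ((cof A) *ᵥ n) 0 = (cof A) 0 0 * w0 + (cof A) 0 1 * w1 + (cof A) 0 2 * w2 := by
      rw [hk, e0, e1, e2]; ring
    rw [this, hw0, hw1, hw2]
    simp only [hA, cof, adjugate_fin_three, transpose_apply]
    simp
    ring
  have k1 : (A *ᵥ u) 2 * (A *ᵥ v) 0 - (A *ᵥ u) 0 * (A *ᵥ v) 2 = c * ((cof A) *ᵥ n) 1 := by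
    have : c * ((cof A) *ᵥ n) 1 = (cof A) 1 0 * w0 + (cof A) 1 1 * w1 + (cof A) 1 2 * w2 := by
      rw [hk, e0, e1, e2]; ring
    rw [this, hw0, hw1, hw2]
    simp only [hA, cof, adjugate_fin_three, transpose_apply]
    simp
    ring
  have k2 : (A *ᵥ u) 0 * (A *ᵥ v) 1 - (A *ᵥ u) 1 * (A *ᵥ v) 0 = c * ((cof A) *ᵥ n) 2 := by
    have : c * ((cof A) *ᵥ n) 2 = (cof A) 2 0 * w0 + (cof A) 2 1 * w1 + (cof A) 2 2 * w2 := by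
      rw [hk, e0, e1, e2]; ring
    rw [this, hw0, hw1, hw2]
    simp only [hA, cof, adjugate_fin_three, transpose_apply]
    simp
    ring
  rw [lag, k0, k1, k2, Fin.sum_univ_three]
  linear_combination ((cof A *ᵥ n) 0 ^ 2 + (cof A *ᵥ n) 1 ^ 2 + (cof A *ᵥ n) 2 ^ 2) * hcc

lemma finrank_tangent (x0 : EuclideanSpace ℝ (Fin 3)) (hx : x0 ≠ 0) :
    finrank ℝ (Submodule.span ℝ {x0})ᗮ = 2 := by
  have : Fact (finrank ℝ (EuclideanSpace ℝ (Fin 3)) = 2 + 1) := ⟨by simp⟩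
  exact Submodule.finrank_orthogonal_span_singleton hx

lemma normDet_tangent (a : ℝ) (ha : 0 < a) (x0 : EuclideanSpace ℝ (Fin 3)) (hx : ‖x0‖ = a)
    (L : EuclideanSpace ℝ (Fin 3) →L[ℝ] EuclideanSpace ℝ (Fin 3))
    (A : Matrix (Fin 3) (Fin 3) ℝ) (hA : ∀ i j, A i j = L (EuclideanSpace.single j 1) i) :
    (L.toLinearMap ∘ₗ (Submodule.span ℝ {x0})ᗮ.subtype).normDet =
      Real.sqrt (∑ i, ((cof A).mulVec (fun j => x0 j / a) i) ^ 2) := by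
  have hx0 : x0 ≠ 0 := by rintro rfl; simp at hx; linarith
  have hT := finrank_tangent x0 hx0
  let b : OrthonormalBasis (Fin 2) ℝ (Submodule.span ℝ {x0})ᗮ :=
    (stdOrthonormalBasis ℝ _).reindex (finCongr hT)
  have hdot : ∀ p q : EuclideanSpace ℝ (Fin 3), inner ℝ p q = (p : Fin 3 → ℝ) ⬝ᵥ (q : Fin 3 → ℝ) := by
    intro p q
    simp [PiLp.inner_apply, dotProduct, mul_comm]
  have hL : ∀ z : EuclideanSpace ℝ (Fin 3), (L z : Fin 3 → ℝ) = A *ᵥ (z : Fin 3 → ℝ) := by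
    intro z
    ext i
    have hz : z = ∑ j, z j • EuclideanSpace.single j (1:ℝ) := by
      have := (EuclideanSpace.basisFun (Fin 3) ℝ).sum_repr z
      simpa using this.symm
    conv_lhs => rw [hz]
    simp [mulVec, dotProduct, hA, mul_comm]
  have hmem : ∀ t : (Submodule.span ℝ {x0})ᗮ, inner ℝ (t : EuclideanSpace ℝ (Fin 3)) x0 = 0 :=
    fun t => Submodule.mem_orthogonal_singleton_iff_inner_left.1 t.2
  have hn : ∀ t : (Submodule.span ℝ {x0})ᗮ,
      ((t : EuclideanSpace ℝ (Fin 3)) : Fin 3 → ℝ) ⬝ᵥ (fun j => x0 j / a) = 0 := by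
    intro t
    have := hmem t
    rw [hdot] at this
    have h2 : (fun j => x0 j / a) = a⁻¹ • (x0 : Fin 3 → ℝ) := by
      ext j; simp [div_eq_inv_mul]
    rw [h2, dotProduct_smul, this, smul_zero]
  have hnn : (fun j => x0 j / a) ⬝ᵥ (fun j => x0 j / a) = 1 := by
    have h2 : (fun j => x0 j / a) = a⁻¹ • (x0 : Fin 3 → ℝ) := by
      ext j; simp [div_eq_inv_mul]
    rw [h2, dotProduct_smul, smul_dotProduct, ← hdot, real_inner_self_eq_norm_sq, hx]
    simp only [smul_eq_mul]
    field_simp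
  have hb : ∀ i j, ((b i : EuclideanSpace ℝ (Fin 3)) : Fin 3 → ℝ) ⬝ᵥ
      ((b j : EuclideanSpace ℝ (Fin 3)) : Fin 3 → ℝ) = if i = j then 1 else 0 := by
    intro i j
    rw [← hdot, ← Submodule.coe_inner]
    exact orthonormal_iff_ite.1 b.orthonormal i j
  have key := cof_gram_identity A _ _ _ ((hb 0 0).trans (by simp)) ((hb 1 1).trans (by simp))
    ((hb 0 1).trans (by simp)) (hn _) (hn _) hnn
  rw [← key]
  have hg := (L.toLinearMap ∘ₗ (Submodule.span ℝ {x0})ᗮ.subtype).normDet_sq_eq_det_gram b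
  simp only [RCLike.ofReal_real_eq_id, id, Matrix.det_fin_two, Matrix.gram_apply] at hg
  rw [← Real.sqrt_sq (LinearMap.normDet_nonneg _), hg]
  congr 1
  simp only [LinearMap.comp_apply, Submodule.subtype_apply, ContinuousLinearMap.coe_coe, hdot, hL]
  rw [dotProduct_comm (A *ᵥ ((b 1 : EuclideanSpace ℝ (Fin 3)) : Fin 3 → ℝ))
    (A *ᵥ ((b 0 : EuclideanSpace ℝ (Fin 3)) : Fin 3 → ℝ))]
  ring

/-- Near a point of the sphere the displacement between points of the sphere is almost tangent. -/
lemma sphere_normal_part (a : ℝ) (ha : 0 < a) (x0 : EuclideanSpace ℝ (Fin 3)) (hx : ‖x0‖ = a)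
    (ε : ℝ) (x x' : EuclideanSpace ℝ (Fin 3)) (h1 : ‖x‖ = a) (h2 : ‖x'‖ = a)
    (d1 : ‖x - x0‖ ≤ a * ε) (d2 : ‖x' - x0‖ ≤ a * ε) :
    ‖(x - x') - ((Submodule.span ℝ {x0})ᗮ.orthogonalProjectionOnto (x - x') :
        EuclideanSpace ℝ (Fin 3))‖ ≤ ε * ‖x - x'‖ := by
  have e : (x - x') - ((Submodule.span ℝ {x0})ᗮ.orthogonalProjectionOnto (x - x') :
        EuclideanSpace ℝ (Fin 3)) = (inner ℝ x0 (x - x') / (a ^ 2)) • x0 := by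
    rw [Submodule.coe_orthogonalProjectionOnto_apply, Submodule.starProjection_orthogonal_val]
    have hs : (Submodule.span ℝ {x0}).starProjection (x - x') =
        (inner ℝ x0 (x - x') / (a ^ 2)) • x0 := by
      rw [Submodule.starProjection_singleton, hx]
      rfl
    rw [hs]
    abel
  rw [e, norm_smul, hx]
  have hz : inner ℝ (x + x') (x - x') = 0 := by
    rw [inner_add_left, inner_sub_right, inner_sub_right, real_inner_self_eq_norm_sq,
      real_inner_self_eq_norm_sq, h1, h2, real_inner_comm]
    ring
  have hi : inner ℝ x0 (x - x') =
      - (1/2) * (inner ℝ (x - x0) (x - x') + inner ℝ (x' - x0) (x - x')) := by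
    rw [← inner_add_left]
    have : (x - x0) + (x' - x0) = (x + x') - (2:ℝ) • x0 := by rw [two_smul]; abel
    rw [this, inner_sub_left, hz, real_inner_smul_left]
    ring
  have b1 := abs_real_inner_le_norm (x - x0) (x - x')
  have b2 := abs_real_inner_le_norm (x' - x0) (x - x')
  have hb : |inner ℝ x0 (x - x')| ≤ a * ε * ‖x - x'‖ := by
    rw [hi, abs_mul, abs_neg, abs_of_pos (by norm_num : (0:ℝ) < 1/2)]
    have := abs_add_le (inner ℝ (x - x0) (x - x')) (inner ℝ (x' - x0) (x - x'))
    have c1 := mul_le_mul_of_nonneg_right d1 (norm_nonneg (x - x'))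
    have c2 := mul_le_mul_of_nonneg_right d2 (norm_nonneg (x - x'))
    linarith
  rw [Real.norm_eq_abs, abs_div, abs_of_pos (by positivity : 0 < a ^ 2)]
  rw [div_mul_eq_mul_div, div_le_iff₀ (by positivity)]
  nlinarith [mul_le_mul_of_nonneg_right hb ha.le]

end SphereGeometry

section Main

lemma sphere_local (a : ℝ) (ha : 0 < a)
    (y : EuclideanSpace ℝ (Fin 3) → EuclideanSpace ℝ (Fin 3))
    (x0 : EuclideanSpace ℝ (Fin 3)) (hx : ‖x0‖ = a)
    (hy : HasStrictFDerivAt y (fderiv ℝ y x0) x0) (η : ℝ) (hη : 0 < η) :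
    ∃ N : Set (EuclideanSpace ℝ (Fin 3)), IsOpen N ∧ x0 ∈ N ∧
      μH[2] (N ∩ Metric.sphere 0 a) < ⊤ ∧
      ∀ A ⊆ N ∩ Metric.sphere 0 a,
        μH[2] (y '' A) ≤ ENNReal.ofReal
          (Real.sqrt (∑ i, ((cof (jacE y x0)).mulVec (fun j => x0 j / a) i)^2) + η) * μH[2] A ∧
        ENNReal.ofReal
          (Real.sqrt (∑ i, ((cof (jacE y x0)).mulVec (fun j => x0 j / a) i)^2)) * μH[2] A
          ≤ μH[2] (y '' A) + ENNReal.ofReal η * μH[2] A := by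
  have hx0 : x0 ≠ 0 := by rintro rfl; simp at hx; linarith
  have hT := finrank_tangent x0 hx0
  set L := fderiv ℝ y x0 with hL
  rw [← normDet_tangent a ha x0 hx L (jacE y x0) (fun i j => rfl)]
  set T := (Submodule.span ℝ {x0})ᗮ with hTdef
  set M : T →ₗ[ℝ] EuclideanSpace ℝ (Fin 3) := L.toLinearMap ∘ₗ T.subtype with hM
  obtain ⟨δ, hδ, hloc⟩ := local_area_estimate (V := EuclideanSpace ℝ (Fin 3)) hT M η hη
  have hLn : 0 ≤ ‖L‖ := norm_nonneg L
  obtain ⟨ε, hε, hε1, hε2⟩ : ∃ ε : ℝ, 0 < ε ∧ ε ≤ 1 / 2 ∧ 2 * ε * (1 + ‖L‖) ≤ δ := by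
    refine ⟨min (1/2) (δ / (2 * (1 + ‖L‖))), by positivity, min_le_left _ _, ?_⟩
    have := min_le_right (1/2) (δ / (2 * (1 + ‖L‖)))
    rw [le_div_iff₀ (by positivity)] at this
    linarith
  obtain ⟨s, hs, hap⟩ := hy.approximates_deriv_on_nhds (c := ⟨ε, hε.le⟩) (Or.inr hε)
  obtain ⟨N, hNs, hN, hxN⟩ := mem_nhds_iff.1
    (inter_mem hs (Metric.ball_mem_nhds x0 (mul_pos ha hε)))
  let P : EuclideanSpace ℝ (Fin 3) → T := fun x => T.orthogonalProjectionOnto x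
  have hPsub : ∀ x x', P x - P x' = T.orthogonalProjectionOnto (x - x') := fun x x' =>
    (map_sub _ _ _).symm
  have h1 : ∀ x x', dist (P x) (P x') ≤ dist x x' := by
    intro x x'
    rw [dist_eq_norm, dist_eq_norm, hPsub]
    exact T.norm_orthogonalProjectionOnto_apply_le _
  have hn : ∀ x ∈ N ∩ Metric.sphere 0 a, ∀ x' ∈ N ∩ Metric.sphere 0 a,
      ‖(x - x') - (T.orthogonalProjectionOnto (x - x') : EuclideanSpace ℝ (Fin 3))‖
        ≤ ε * ‖x - x'‖ := by
    intro x hxx x' hxx'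
    apply sphere_normal_part a ha x0 hx ε x x' (by simpa using hxx.2) (by simpa using hxx'.2)
    · have := (hNs hxx.1).2
      rw [Metric.mem_ball, dist_eq_norm] at this
      exact this.le
    · have := (hNs hxx'.1).2
      rw [Metric.mem_ball, dist_eq_norm] at this
      exact this.le
  have hd : ∀ x ∈ N ∩ Metric.sphere 0 a, ∀ x' ∈ N ∩ Metric.sphere 0 a,
      (1 - ε) * ‖x - x'‖ ≤ ‖P x - P x'‖ := by
    intro x hxx x' hxx'
    have := hn x hxx x' hxx'
    rw [hPsub]
    have h3 := norm_le_norm_add_norm_sub'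
      (x - x') (T.orthogonalProjectionOnto (x - x') : EuclideanSpace ℝ (Fin 3))
    have hcn : ‖(T.orthogonalProjectionOnto (x - x') : EuclideanSpace ℝ (Fin 3))‖ =
        ‖T.orthogonalProjectionOnto (x - x')‖ := rfl
    rw [hcn] at h3
    linarith
  have h2 : ∀ x ∈ N ∩ Metric.sphere 0 a, ∀ x' ∈ N ∩ Metric.sphere 0 a,
      dist x x' ≤ (1 + δ) * dist (P x) (P x') := by
    intro x hxx x' hxx'
    have := hd x hxx x' hxx'
    rw [dist_eq_norm, dist_eq_norm]
    have hle : 2 * ε ≤ δ := by nlinarith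
    have hp := norm_nonneg (x - x')
    have : (1 + 2 * ε) * ((1 - ε) * ‖x - x'‖) ≤ (1 + δ) * ‖P x - P x'‖ :=
      mul_le_mul (by linarith) this (mul_nonneg (by linarith) hp) (by linarith)
    nlinarith [mul_nonneg (mul_nonneg hε.le (by linarith : 0 ≤ 1 - 2 * ε)) hp]
  have h3 : ∀ x ∈ N ∩ Metric.sphere 0 a, ∀ x' ∈ N ∩ Metric.sphere 0 a,
      ‖y x - y x' - M (P x - P x')‖ ≤ δ * dist (P x) (P x') := by
    intro x hxx x' hxx'
    have e1 := hap x (hNs hxx.1).1 x' (hNs hxx'.1).1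
    change _ ≤ ε * _ at e1
    have e2 := hn x hxx x' hxx'
    have e3 := hd x hxx x' hxx'
    have e4 : y x - y x' - M (P x - P x') = (y x - y x' - L (x - x')) +
        L ((x - x') - (T.orthogonalProjectionOnto (x - x') : EuclideanSpace ℝ (Fin 3))) := by
      rw [hPsub, map_sub L (x - x') (T.orthogonalProjectionOnto (x - x') :
        EuclideanSpace ℝ (Fin 3))]
      change _ - L (T.orthogonalProjectionOnto (x - x') : EuclideanSpace ℝ (Fin 3)) = _
      abel
    rw [e4, dist_eq_norm]
    have e5 := L.le_opNorm
      ((x - x') - (T.orthogonalProjectionOnto (x - x') : EuclideanSpace ℝ (Fin 3)))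
    have e6 := norm_add_le (y x - y x' - L (x - x'))
      (L ((x - x') - (T.orthogonalProjectionOnto (x - x') : EuclideanSpace ℝ (Fin 3))))
    have e7 := mul_le_mul_of_nonneg_left e2 hLn
    have hp := norm_nonneg (x - x')
    have e8 : ‖x - x'‖ ≤ 2 * ‖P x - P x'‖ := by nlinarith
    have e9 : ε * (1 + ‖L‖) * ‖x - x'‖ ≤ ε * (1 + ‖L‖) * (2 * ‖P x - P x'‖) := by gcongr
    have e10 : 2 * ε * (1 + ‖L‖) * ‖P x - P x'‖ ≤ δ * ‖P x - P x'‖ := by gcongr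
    linarith
  refine ⟨N, hN, hxN, ?_, fun A hA => hloc A y P (fun x _ x' _ => h1 x x')
    (fun x hxx x' hxx' => h2 x (hA hxx) x' (hA hxx'))
    (fun x hxx x' hxx' => h3 x (hA hxx) x' (hA hxx'))⟩
  have hfin := hausdorff_image_le_of_dist_le id P (N ∩ Metric.sphere 0 a)
    (Real.toNNReal (1 + δ)) (by
      rw [Real.coe_toNNReal _ (by positivity)]
      exact h2)
  rw [Set.image_id] at hfin
  refine hfin.trans_lt (ENNReal.mul_lt_top (by simp) ?_)
  have hbdd : Bornology.IsBounded (P '' (N ∩ Metric.sphere 0 a)) := by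
    have : LipschitzWith 1 P := LipschitzWith.of_dist_le_mul (by simpa using h1)
    exact this.isBounded_image (Metric.isBounded_sphere.subset Set.inter_subset_right)
  have hhaar : (μH[finrank ℝ T] : Measure T).IsAddHaarMeasure := inferInstance
  rw [hT] at hhaar
  push_cast at hhaar
  exact hbdd.measure_lt_top

lemma continuousOn_jac
    (U : Set (EuclideanSpace ℝ (Fin 3))) (hU : IsOpen U)
    (y : EuclideanSpace ℝ (Fin 3) → EuclideanSpace ℝ (Fin 3))
    (hy : ContDiffOn ℝ 1 y U) : ContinuousOn (fun x => jacE y x) U := by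
  have h := hy.continuousOn_fderiv_of_isOpen hU le_rfl
  refine continuousOn_pi.2 fun i => continuousOn_pi.2 fun j => ?_
  have h1 : ContinuousOn (fun x => fderiv ℝ y x (EuclideanSpace.single j 1)) U :=
    h.clm_apply continuousOn_const
  exact (EuclideanSpace.proj (𝕜 := ℝ) i).continuous.comp_continuousOn h1

lemma continuousOn_mulVec_aux {X : Type*} [TopologicalSpace X] (U : Set X)
    (J : X → Matrix (Fin 3) (Fin 3) ℝ) (v : X → Fin 3 → ℝ)
    (hJ : ContinuousOn J U) (hv : ContinuousOn v U) :
    ContinuousOn (fun x => Real.sqrt (∑ i, ((cof (J x)).mulVec (v x) i)^2)) U := by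
  rw [continuousOn_iff_continuous_restrict] at *
  have hc : Continuous (fun p : U => (cof (J p)).mulVec (v p)) := by
    apply Continuous.matrix_mulVec
    · exact (Continuous.matrix_adjugate hJ).matrix_transpose
    · exact hv
  have hi : ∀ i, Continuous (fun p : U => ((cof (J p)).mulVec (v p) i)^2) := fun i =>
    ((continuous_apply i).comp hc).pow 2
  have hs : Continuous (fun p : U => ∑ i, ((cof (J p)).mulVec (v p) i)^2) :=
    continuous_finsetSum _ fun i _ => hi i
  exact hs.sqrt

lemma continuousOn_cof_jac (a : ℝ)
    (U : Set (EuclideanSpace ℝ (Fin 3))) (hU : IsOpen U)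
    (y : EuclideanSpace ℝ (Fin 3) → EuclideanSpace ℝ (Fin 3))
    (hy : ContDiffOn ℝ 1 y U) :
    ContinuousOn (fun x => 
      Real.sqrt (∑ i, ((cof (jacE y x)).mulVec (fun j => x j / a) i)^2)) U := by
  have hv : Continuous (fun (x : EuclideanSpace ℝ (Fin 3)) (j : Fin 3) => x j / a) := by
    fun_prop
  exact continuousOn_mulVec_aux U (jacE y) (fun x j => x j / a)
    (continuousOn_jac U hU y hy) hv.continuousOn

/-- Global two sided estimate with error `η`. -/
lemma sphere_global (a : ℝ) (ha : 0 < a)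
    (U : Set (EuclideanSpace ℝ (Fin 3))) (hU : IsOpen U)
    (hsub : Metric.sphere (0 : EuclideanSpace ℝ (Fin 3)) a ⊆ U)
    (y : EuclideanSpace ℝ (Fin 3) → EuclideanSpace ℝ (Fin 3))
    (hy : ContDiffOn ℝ 1 y U) (hinj : Set.InjOn y U)
    (F : EuclideanSpace ℝ (Fin 3) → ℝ)
    (hF : F = fun x => Real.sqrt (∑ i, ((cof (jacE y x)).mulVec (fun j => x j / a) i)^2))
    (η : ℝ) (hη : 0 < η) :
    μH[2] (Metric.sphere (0 : EuclideanSpace ℝ (Fin 3)) a) < ⊤ ∧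
    μH[2] (y '' Metric.sphere 0 a) ≤ (∫⁻ x in Metric.sphere 0 a, ENNReal.ofReal (F x) ∂μH[2])
      + ENNReal.ofReal η * μH[2] (Metric.sphere (0 : EuclideanSpace ℝ (Fin 3)) a) ∧
    (∫⁻ x in Metric.sphere 0 a, ENNReal.ofReal (F x) ∂μH[2]) ≤ μH[2] (y '' Metric.sphere 0 a)
      + ENNReal.ofReal η * μH[2] (Metric.sphere (0 : EuclideanSpace ℝ (Fin 3)) a) := by
  set S := Metric.sphere (0 : EuclideanSpace ℝ (Fin 3)) a with hS
  have hSm : MeasurableSet S := Metric.isClosed_sphere.measurableSet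
  have hind : ∃ s' : Set (EuclideanSpace ℝ (Fin 3)), MeasurableSet s' ∧ S ⊆ s' ∧
      μH[2] (s' ∩ S) < ⊤ ∧ ∀ A ⊆ s' ∩ S, MeasurableSet A →
        μH[2] (y '' A) ≤ (∫⁻ x in A, ENNReal.ofReal (F x) ∂μH[2]) + ENNReal.ofReal η * μH[2] A ∧
        (∫⁻ x in A, ENNReal.ofReal (F x) ∂μH[2]) ≤
          μH[2] (y '' A) + ENNReal.ofReal η * μH[2] A := by
    refine (isCompact_sphere (0 : EuclideanSpace ℝ (Fin 3)) a).induction_on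
      (p := fun s => ∃ s' : Set (EuclideanSpace ℝ (Fin 3)), MeasurableSet s' ∧ s ⊆ s' ∧
      μH[2] (s' ∩ S) < ⊤ ∧ ∀ A ⊆ s' ∩ S, MeasurableSet A →
        μH[2] (y '' A) ≤ (∫⁻ x in A, ENNReal.ofReal (F x) ∂μH[2]) + ENNReal.ofReal η * μH[2] A ∧
        (∫⁻ x in A, ENNReal.ofReal (F x) ∂μH[2]) ≤
          μH[2] (y '' A) + ENNReal.ofReal η * μH[2] A) ?_ ?_ ?_ ?_
    · refine ⟨∅, MeasurableSet.empty, le_rfl, by simp, fun A hA _ => ?_⟩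
      have : A = ∅ := by simpa using hA
      subst this
      simp
    · rintro s t hst ⟨s', h1, h2, h3⟩
      exact ⟨s', h1, hst.trans h2, h3⟩
    · rintro s t ⟨s', hs1, hs2, hs3, hs4⟩ ⟨t', ht1, ht2, ht3, ht4⟩
      refine ⟨s' ∪ t', hs1.union ht1, Set.union_subset_union hs2 ht2, ?_, ?_⟩
      · rw [Set.union_inter_distrib_right]
        exact (measure_union_le _ _).trans_lt (ENNReal.add_lt_top.2 ⟨hs3, ht3⟩)
      · intro A hA hAm
        obtain ⟨u1, l1⟩ := hs4 (A ∩ s') (fun x hx => ⟨hx.2, (hA hx.1).2⟩) (hAm.inter hs1)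
        obtain ⟨u2, l2⟩ := ht4 (A \ s') (fun x hx =>
          ⟨(hA hx.1).1.resolve_left hx.2, (hA hx.1).2⟩) (hAm.diff hs1)
        have m1 : μH[2] A = μH[2] (A ∩ s') + μH[2] (A \ s') :=
          (measure_inter_add_diff A hs1).symm
        have m2 : (∫⁻ x in A, ENNReal.ofReal (F x) ∂μH[2]) =
            (∫⁻ x in A ∩ s', ENNReal.ofReal (F x) ∂μH[2]) +
            (∫⁻ x in A \ s', ENNReal.ofReal (F x) ∂μH[2]) :=
          (lintegral_inter_add_sdiff _ A hs1).symm
        have hAU : A ⊆ U := fun x hx => hsub (hA hx).2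
        have m3 : μH[2] (y '' A) = μH[2] (y '' (A ∩ s')) + μH[2] (y '' (A \ s')) := by
          rw [← measure_union _ _, ← Set.image_union, Set.inter_union_diff]
          · refine Set.disjoint_image_image ?_
            intro p hp q hq hpq
            have := hinj (hAU hp.1) (hAU hq.1) hpq
            exact hq.2 (this ▸ hp.2)
          · exact (hAm.diff hs1).image_of_continuousOn_injOn
              (hy.continuousOn.mono (Set.diff_subset.trans hAU))
              (hinj.mono (Set.diff_subset.trans hAU))
        rw [m1, m2, m3, mul_add]
        constructor
        · calc _ ≤ _ := add_le_add u1 u2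
            _ = _ := by ring
        · calc _ ≤ _ := add_le_add l1 l2
            _ = _ := by ring
    · intro x0 hx0
      have hxU := hsub hx0
      have hsd : HasStrictFDerivAt y (fderiv ℝ y x0) x0 :=
        (hy.contDiffAt (hU.mem_nhds hxU)).hasStrictFDerivAt one_ne_zero
      obtain ⟨N, hN, hxN, hfin, hNA⟩ := sphere_local a ha y x0 (by simpa using hx0) hsd (η/2)
        (by positivity)
      have hcont : ContinuousAt F x0 := by
        rw [hF]
        exact (continuousOn_cof_jac a U hU y hy).continuousAt (hU.mem_nhds hxU)
      obtain ⟨N', hN's, hN', hxN'⟩ := mem_nhds_iff.1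
        (hcont.eventually (Metric.ball_mem_nhds (F x0) (show 0 < η/2 by positivity)))
      have hF0 : ∀ x, 0 ≤ F x := fun x => by rw [hF]; exact Real.sqrt_nonneg _
      refine ⟨N ∩ N', mem_nhdsWithin_of_mem_nhds ((hN.inter hN').mem_nhds ⟨hxN, hxN'⟩),
        N ∩ N', (hN.inter hN').measurableSet, le_rfl, ?_, ?_⟩
      · exact (measure_mono (Set.inter_subset_inter_left _ Set.inter_subset_left)).trans_lt hfin
      · intro A hA hAm
        obtain ⟨u, l⟩ := hNA A (fun x hx => ⟨(hA hx).1.1, (hA hx).2⟩)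
        have hval : Real.sqrt (∑ i, ((cof (jacE y x0)).mulVec (fun j => x0 j / a) i)^2) = F x0 := by
          rw [hF]
        rw [hval] at u l
        have hb : ∀ x ∈ A, |F x - F x0| < η/2 := fun x hx => by
          have := hN's (hA hx).1.2
          simpa [Real.dist_eq] using this
        have i1 : ENNReal.ofReal (F x0) * μH[2] A ≤
            (∫⁻ x in A, ENNReal.ofReal (F x) ∂μH[2]) + ENNReal.ofReal (η/2) * μH[2] A := by
          rw [← setLIntegral_const, ← setLIntegral_const, ← lintegral_add_right _ measurable_const]
          refine setLIntegral_mono' hAm fun x hx => ?_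
          rw [← ENNReal.ofReal_add (hF0 x) (by positivity)]
          exact ENNReal.ofReal_le_ofReal (by linarith [abs_lt.1 (hb x hx)])
        have i2 : (∫⁻ x in A, ENNReal.ofReal (F x) ∂μH[2]) ≤
            ENNReal.ofReal (F x0) * μH[2] A + ENNReal.ofReal (η/2) * μH[2] A := by
          rw [← setLIntegral_const, ← setLIntegral_const, ← lintegral_add_right _ measurable_const]
          refine setLIntegral_mono' hAm fun x hx => ?_
          rw [← ENNReal.ofReal_add (hF0 x0) (by positivity)]
          exact ENNReal.ofReal_le_ofReal (by linarith [abs_lt.1 (hb x hx)])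
        have hηη : ENNReal.ofReal η = ENNReal.ofReal (η/2) + ENNReal.ofReal (η/2) := by
          rw [← ENNReal.ofReal_add (by positivity) (by positivity)]; congr 1; ring
        rw [hηη, add_mul, ← add_assoc, ← add_assoc]
        constructor
        · refine u.trans ?_
          rw [ENNReal.ofReal_add (hF0 x0) (by positivity), add_mul]
          gcongr
        · refine i2.trans ?_
          gcongr
  obtain ⟨s', _, h2, h3, h4⟩ := hind
  have he : s' ∩ S = S := Set.inter_eq_right.2 h2
  rw [he] at h3 h4
  exact ⟨h3, h4 S le_rfl hSm⟩

end Main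

/-- Area formula for the image of the sphere `∂B_a` under an injective C¹ map:
`H²(y(∂B_a)) = ∫_{∂B_a} |cof(∇y) ν| dH²` with `ν(x) = x/a`. -/
theorem hausdorff_measure_image_sphere
    (a : ℝ) (ha : 0 < a)
    (U : Set (EuclideanSpace ℝ (Fin 3))) (hU : IsOpen U)
    (hsub : Metric.sphere (0 : EuclideanSpace ℝ (Fin 3)) a ⊆ U)
    (y : EuclideanSpace ℝ (Fin 3) → EuclideanSpace ℝ (Fin 3))
    (hy : ContDiffOn ℝ 1 y U) (hinj : Set.InjOn y U) :
    μH[2] (y '' Metric.sphere (0 : EuclideanSpace ℝ (Fin 3)) a)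
      = ∫⁻ x in Metric.sphere (0 : EuclideanSpace ℝ (Fin 3)) a,
          ENNReal.ofReal
            (Real.sqrt (∑ i, ((cof (jacE y x)).mulVec (fun j => x j / a) i)^2))
          ∂(μH[2]) := by
  have hfin := (sphere_global a ha U hU hsub y hy hinj _ rfl 1 one_pos).1
  have ht : Tendsto (fun η : ℝ => ENNReal.ofReal η *
      μH[2] (Metric.sphere (0 : EuclideanSpace ℝ (Fin 3)) a)) (𝓝[>] 0) (𝓝 0) := by
    have h1 : Tendsto (fun η : ℝ => ENNReal.ofReal η) (𝓝[>] 0) (𝓝 0) := by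
      have := ENNReal.continuous_ofReal.tendsto 0
      rw [ENNReal.ofReal_zero] at this
      exact this.mono_left nhdsWithin_le_nhds
    have := ENNReal.Tendsto.mul_const h1 (Or.inr hfin.ne)
    simpa using this
  apply le_antisymm
  · have h2 := ht.const_add (∫⁻ x in Metric.sphere (0 : EuclideanSpace ℝ (Fin 3)) a,
      ENNReal.ofReal (Real.sqrt (∑ i, ((cof (jacE y x)).mulVec (fun j => x j / a) i)^2)) ∂(μH[2]))
    rw [add_zero] at h2
    refine ge_of_tendsto h2 ?_
    filter_upwards [self_mem_nhdsWithin] with η hη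
    exact (sphere_global a ha U hU hsub y hy hinj _ rfl η hη).2.1
  · have h2 := ht.const_add (μH[2] (y '' Metric.sphere (0 : EuclideanSpace ℝ (Fin 3)) a))
    rw [add_zero] at h2
    refine ge_of_tendsto h2 ?_
    filter_upwards [self_mem_nhdsWithin] with η hη
    exact (sphere_global a ha U hU hsub y hy hinj _ rfl η hη).2.2
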